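/- Let $Y$ be an infinite-dimensional separable Banach space. Then for every equivalent norm on $Y$ and every $\delta > 0$, there is an equivalent norm $\|\cdot\|_1$ on $Y$ within Banach-Mazur distance $\delta$ of the given norm such that $(Y, \|\cdot\|_1)$ is strictly convex but not locally uniformly convex (in particular, not uniformly convex). -/

import Mathlib

open Filter

/-!
The given norm `p` is first made flat near a point `e` normed by a functional `f`: for `θ < 1`, the
norm `max (θ p) |f|` equals `|f|` near `e`, hence is constant on small translates of `e` (and of
`2 e`) along `ker f`. Then one adds `t ‖T x‖`, with `T` an injective operator into `ℓ²`. This makes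
the norm strictly convex, because equality in the triangle inequality for the sum forces equality
for `‖T x‖`, i.e. `T x` and `T y` on a common ray. In infinite dimension `T` is not bounded below on
`ker f`, so there are `w n ∈ ker f` of constant `p`-norm with `T (w n) → 0`. The added term does not
see them in the limit, and the sequence `e + w n` violates local uniform convexity at `e`.
-/

open scoped NNReal Topology

section HahnBanach

variable {𝕜 E : Type*} [RCLike 𝕜] [AddCommGroup E] [Module 𝕜 E]

theorem exists_dual_apply_eq_seminorm (p : Seminorm 𝕜 E) (x : E) :
    ∃ f : Module.Dual 𝕜 E, f x = p x ∧ ∀ y, ‖f y‖ ≤ p y := by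
  rcases eq_or_ne x 0 with rfl | hx
  · exact ⟨0, by simp, by simp⟩
  let g : Module.Dual 𝕜 (𝕜 ∙ x) := (p x : 𝕜) • (LinearEquiv.coord 𝕜 E x hx).toLinearMap
  have hg_le (y : 𝕜 ∙ x) : ‖g y‖ ≤ p y := by
    conv_rhs => rw [← LinearEquiv.coord_apply_smul 𝕜 E x hx y, map_smul_eq_mul]
    rw [LinearMap.smul_apply, smul_eq_mul, norm_mul, RCLike.norm_ofReal,
      abs_of_nonneg (apply_nonneg p x), mul_comm, LinearEquiv.coe_coe]
  obtain ⟨f, hfg, hf⟩ := Module.Dual.exists_extension_of_le_seminorm _ g hg_le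
  refine ⟨f, ?_, hf⟩
  rw [hfg ⟨x, Submodule.mem_span_singleton_self x⟩]
  rw [LinearMap.smul_apply, LinearEquiv.coe_coe, LinearEquiv.coord_self, smul_eq_mul, mul_one]

variable [TopologicalSpace E] [IsTopologicalAddGroup E] [TopologicalSpace.SeparableSpace E]

theorem exists_separating_seq_dual {p : Seminorm 𝕜 E} (hp : Continuous p)
    (hp0 : ∀ x, p x = 0 → x = 0) :
    ∃ F : ℕ → Module.Dual 𝕜 E, (∀ k x, ‖F k x‖ ≤ p x) ∧ ∀ x, (∀ k, F k x = 0) → x = 0 := by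
  choose G hG_eq hG_le using exists_dual_apply_eq_seminorm p
  let d : ℕ → E := TopologicalSpace.denseSeq E
  refine ⟨fun k => G (d k), fun k => hG_le (d k), fun x hx => ?_⟩
  by_contra hx0
  have hpx : 0 < p x := (apply_nonneg p x).lt_of_ne' fun h => hx0 (hp0 x h)
  obtain ⟨k, hk⟩ : ∃ k, p (d k - x) < p x / 2 :=
    (TopologicalSpace.denseRange_denseSeq E).exists_mem_open
      (isOpen_lt (hp.comp (continuous_id.sub continuous_const)) continuous_const)
      ⟨x, by simpa using hpx⟩
  have hdk : p (d k) ≤ p (d k - x) := calc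
    p (d k) = ‖G (d k) (d k - x)‖ := by
      rw [map_sub, hx k, sub_zero, hG_eq, RCLike.norm_ofReal, abs_of_nonneg (apply_nonneg p _)]
    _ ≤ p (d k - x) := hG_le _ _
  have htri : p x ≤ p (d k) + p (d k - x) := by
    simpa using map_sub_le_add p (d k) (d k - x)
  linarith

end HahnBanach

theorem exists_ne_zero_map_eq_zero {K V W : Type*} [DivisionRing K] [AddCommGroup V] [Module K V]
    [AddCommGroup W] [Module K W] [FiniteDimensional K W] (hV : ¬ FiniteDimensional K V)
    (L : V →ₗ[K] W) : ∃ v, v ≠ 0 ∧ L v = 0 := by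
  by_contra! h
  have hL : Function.Injective L :=
    (injective_iff_map_eq_zero L).2 fun v hv => by_contra fun hv0 => h v hv0 hv
  exact hV (.of_injective L hL)

theorem continuous_of_le_mul_norm {𝕜 E : Type*} [NontriviallyNormedField 𝕜]
    [SeminormedAddCommGroup E] [NormedSpace 𝕜 E] {p : Seminorm 𝕜 E} {C : ℝ}
    (hp : ∀ x, p x ≤ C * ‖x‖) : Continuous p := by
  refine Seminorm.continuous_of_le (q := C.toNNReal • normSeminorm 𝕜 E)
    (continuous_norm.const_smul C.toNNReal) fun x => (hp x).trans ?_
  exact mul_le_mul_of_nonneg_right (Real.le_coe_toNNReal C) (norm_nonneg x)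

theorem sum_sq_inv_four_pow_mul_le {a : ℕ → ℝ} {C : ℝ} {n : ℕ} (ha : ∀ k, ‖a k‖ ≤ C)
    (ha0 : ∀ k < n, a k = 0) (s : Finset ℕ) :
    ∑ k ∈ s, ((1 / 4) ^ k * a k) ^ 2 ≤ (2 * (1 / 2) ^ n * C) ^ 2 := by
  have hterm (k : ℕ) : ((1 / 4) ^ k * a k) ^ 2 ≤ (1 / 2) ^ k * ((1 / 4) ^ n * C ^ 2) := by
    rcases lt_or_ge k n with hkn | hnk
    · rw [ha0 k hkn, mul_zero, zero_pow two_ne_zero]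
      positivity
    · have hquarter : (1 / 4 : ℝ) ^ k ≤ (1 / 4) ^ n :=
        pow_le_pow_of_le_one (by norm_num) (by norm_num) hnk
      have hhalf : (1 / 4 : ℝ) ^ k ≤ (1 / 2) ^ k := by gcongr; norm_num
      have hsq : a k ^ 2 ≤ C ^ 2 := sq_le_sq' (abs_le.1 (ha k)).1 (abs_le.1 (ha k)).2
      calc ((1 / 4) ^ k * a k) ^ 2 = (1 / 4) ^ k * ((1 / 4) ^ k * a k ^ 2) := by ring
        _ ≤ (1 / 2) ^ k * ((1 / 4) ^ n * C ^ 2) := by gcongr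
  have hgeom : ∑ k ∈ s, (1 / 2 : ℝ) ^ k ≤ 2 :=
    (summable_geometric_two.sum_le_tsum s fun _ _ => by positivity).trans_eq tsum_geometric_two
  calc ∑ k ∈ s, ((1 / 4) ^ k * a k) ^ 2
      ≤ (∑ k ∈ s, (1 / 2) ^ k) * ((1 / 4) ^ n * C ^ 2) := by
        rw [Finset.sum_mul]
        exact Finset.sum_le_sum fun k _ => hterm k
    _ ≤ 4 * ((1 / 4) ^ n * C ^ 2) := by gcongr; linarith
    _ = (2 * (1 / 2) ^ n * C) ^ 2 := by
        rw [mul_pow, mul_pow, ← pow_mul, mul_comm n, pow_mul]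
        norm_num [mul_assoc]

section Renorming

variable {E H : Type*} [AddCommGroup E] [Module ℝ E] [NormedAddCommGroup H] [NormedSpace ℝ H]

section WeightedCoord

variable {p : Seminorm ℝ E} {F : ℕ → Module.Dual ℝ E}

/-- The operator `x ↦ (4⁻ᵏ F k x)ₖ` into `ℓ²` attached to a bounded sequence of functionals. It is
injective when the `F k` separate points, and small on the common kernel of the first few of them;
the weights `4⁻ᵏ` are merely a convenient square-summable choice. -/
noncomputable def weightedCoord (hF : ∀ k x, ‖F k x‖ ≤ p x) : E →ₗ[ℝ] lp (fun _ : ℕ => ℝ) 2 where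
  toFun x := ⟨fun k => (1 / 4) ^ k * F k x, memℓp_gen' (C := (2 * (1 / 2) ^ 0 * p x) ^ 2)
    fun s => by simpa [mul_pow] using sum_sq_inv_four_pow_mul_le (n := 0) (hF · x) (by simp) s⟩
  map_add' x y := by ext k; exact (congrArg _ ((F k).map_add x y)).trans (mul_add _ _ _)
  map_smul' c x := by ext k; simp [mul_left_comm]

variable (hF : ∀ k x, ‖F k x‖ ≤ p x)

theorem weightedCoord_apply (x : E) (k : ℕ) : weightedCoord hF x k = (1 / 4) ^ k * F k x := rfl

theorem weightedCoord_injective (hsep : ∀ x, (∀ k, F k x = 0) → x = 0) :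
    Function.Injective (weightedCoord hF) := by
  rw [injective_iff_map_eq_zero]
  intro x hx
  refine hsep x fun k => ?_
  simpa [hx] using (weightedCoord_apply hF x k).symm

theorem norm_weightedCoord_le {n : ℕ} {x : E} (hx : ∀ k < n, F k x = 0) :
    ‖weightedCoord hF x‖ ≤ 2 * (1 / 2) ^ n * p x :=
  lp.norm_le_of_forall_sum_le (by simp) (by positivity) fun s => by
    simpa [mul_pow, weightedCoord_apply] using sum_sq_inv_four_pow_mul_le (hF · x) hx s

theorem exists_seq_weightedCoord_tendsto_zero (hE : ¬ FiniteDimensional ℝ E)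
    (hp0 : ∀ x, p x = 0 → x = 0) (f : Module.Dual ℝ E) {r : ℝ} (hr : 0 ≤ r) :
    ∃ w : ℕ → E, (∀ n, p (w n) = r) ∧ (∀ n, f (w n) = 0) ∧
      Tendsto (fun n => weightedCoord hF (w n)) atTop (𝓝 0) := by
  have hker (n : ℕ) : ∃ x, p x = r ∧ f x = 0 ∧ ∀ k < n, F k x = 0 := by
    obtain ⟨v, hv, hLv⟩ :=
      exists_ne_zero_map_eq_zero hE (f.prod (LinearMap.pi fun k : Fin n => F k))
    have hpv : p v ≠ 0 := mt (hp0 v) hv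
    have hfv : f v = 0 := congrArg Prod.fst hLv
    have hFv (k : ℕ) (hk : k < n) : F k v = 0 := congrFun (congrArg Prod.snd hLv) ⟨k, hk⟩
    refine ⟨(r / p v) • v, ?_, by simp [hfv], fun k hk => by simp [hFv k hk]⟩
    rw [map_smul_eq_mul, Real.norm_of_nonneg (by positivity), div_mul_cancel₀ r hpv]
  choose w hpw hfw hFw using hker
  refine ⟨w, hpw, hfw, squeeze_zero_norm (fun n => norm_weightedCoord_le hF (hFw n)) ?_⟩
  simp only [hpw]
  simpa using ((tendsto_pow_atTop_nhds_zero_of_lt_one (r := (1 / 2 : ℝ)) (by norm_num)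
    (by norm_num)).const_mul 2).mul_const r

end WeightedCoord

/-- Strict convexity of the norm `p`: its unit sphere contains no nontrivial segment, expressed
through midpoints. -/
def IsStrictlyConvex (p : Seminorm ℝ E) : Prop :=
  ∀ x y, p x = 1 → p y = 1 → p ((2⁻¹ : ℝ) • (x + y)) = 1 → x = y

/-- Local uniform convexity of the norm `p` at a point `e` of its unit sphere. -/
def IsLocallyUniformlyConvexAt (p : Seminorm ℝ E) (e : E) : Prop :=
  ∀ u : ℕ → E, Tendsto (fun n => p (u n)) atTop (𝓝 1) →
    Tendsto (fun n => p (e + u n)) atTop (𝓝 2) → Tendsto (fun n => p (e - u n)) atTop (𝓝 0)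

section AddNormComp

/-- The sum of `p` and a small multiple of `x ↦ ‖T x‖`. This is used to make `p` strictly convex
while changing it little. -/
noncomputable def addNormComp (p : Seminorm ℝ E) (t : ℝ≥0) (T : E →ₗ[ℝ] H) : Seminorm ℝ E :=
  p + t • (normSeminorm ℝ H).comp T

variable {p : Seminorm ℝ E} {t : ℝ≥0} {T : E →ₗ[ℝ] H}

theorem addNormComp_apply (x : E) : addNormComp p t T x = p x + t * ‖T x‖ := rfl

theorem le_addNormComp (x : E) : p x ≤ addNormComp p t T x :=
  le_add_of_nonneg_right (by positivity)

theorem isStrictlyConvex_addNormComp [StrictConvexSpace ℝ H] (ht : 0 < t)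
    (hT : Function.Injective T) : IsStrictlyConvex (addNormComp p t T) := by
  intro x y hx hy hxy
  have hmid : addNormComp p t T (x + y) = 2 := by
    rw [map_smul_eq_mul, Real.norm_of_nonneg (by norm_num)] at hxy
    linarith
  have hTadd : ‖T x + T y‖ = ‖T x‖ + ‖T y‖ := by
    refine le_antisymm (norm_add_le _ _) (le_of_mul_le_mul_left ?_ (NNReal.coe_pos.2 ht))
    rw [addNormComp_apply] at hx hy hmid
    rw [T.map_add] at hmid
    linarith [map_add_le_add p x y]
  have hray : SameRay ℝ x y := hT.sameRay_map_iff.1 (sameRay_iff_norm_add.2 hTadd)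
  obtain ⟨u, a, b, ha, hb, -, rfl, rfl⟩ := hray.exists_eq_smul
  rw [map_smul_eq_mul, Real.norm_of_nonneg ha] at hx
  rw [map_smul_eq_mul, Real.norm_of_nonneg hb] at hy
  have hu : addNormComp p t T u ≠ 0 := right_ne_zero_of_mul (hx.trans_ne one_ne_zero)
  rw [mul_right_cancel₀ hu (hx.trans hy.symm)]

theorem tendsto_addNormComp_add {ι : Type*} {l : Filter ι} {w : ι → E} {x : E}
    (hp : Tendsto (fun i => p (x + w i)) l (𝓝 (p x))) (hT : Tendsto (fun i => T (w i)) l (𝓝 0)) :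
    Tendsto (fun i => addNormComp p t T (x + w i)) l (𝓝 (addNormComp p t T x)) := by
  simp only [addNormComp_apply, map_add]
  refine hp.add (Tendsto.const_mul _ ?_)
  simpa using (hT.const_add (T x)).norm

theorem not_isLocallyUniformlyConvexAt_addNormComp {e : E} {w : ℕ → E}
    (he : addNormComp p t T e = 1)
    (h₁ : Tendsto (fun n => p (e + w n)) atTop (𝓝 (p e)))
    (h₂ : Tendsto (fun n => p ((2 : ℝ) • e + w n)) atTop (𝓝 (p ((2 : ℝ) • e))))
    (hT : Tendsto (fun n => T (w n)) atTop (𝓝 0))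
    (hw : ¬ Tendsto (fun n => p (w n)) atTop (𝓝 0)) :
    ¬ IsLocallyUniformlyConvexAt (addNormComp p t T) e := by
  intro hluc
  have hone : Tendsto (fun n => addNormComp p t T (e + w n)) atTop (𝓝 1) :=
    he ▸ tendsto_addNormComp_add h₁ hT
  have htwo : Tendsto (fun n => addNormComp p t T (e + (e + w n))) atTop (𝓝 2) := by
    have h := tendsto_addNormComp_add (t := t) h₂ hT
    rw [map_smul_eq_mul, he, Real.norm_ofNat, mul_one] at h
    simpa only [two_smul, add_assoc] using h
  have hdiff : Tendsto (fun n => addNormComp p t T (w n)) atTop (𝓝 0) := by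
    simpa [map_neg_eq_map] using hluc _ hone htwo
  exact hw (squeeze_zero (fun n => apply_nonneg p _) (fun n => le_addNormComp _) hdiff)

end AddNormComp

section SlabSeminorm

/-- The seminorm whose unit ball is `{x | θ p x ≤ 1}` cut by the slab `{x | |f x| ≤ 1}`. When
`θ < 1` and `f` norms a point of the unit sphere of `p`, this creates a flat face around it. -/
noncomputable def slabSeminorm (θ : ℝ≥0) (p : Seminorm ℝ E) (f : Module.Dual ℝ E) :
    Seminorm ℝ E :=
  θ • p ⊔ (normSeminorm ℝ ℝ).comp f

variable {θ : ℝ≥0} {p : Seminorm ℝ E} {f : Module.Dual ℝ E}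

theorem slabSeminorm_apply (x : E) : slabSeminorm θ p f x = max (θ * p x) ‖f x‖ := rfl

theorem mul_le_slabSeminorm (x : E) : θ * p x ≤ slabSeminorm θ p f x := le_max_left _ _

theorem slabSeminorm_le (hθ : θ ≤ 1) (hf : ∀ x, ‖f x‖ ≤ p x) (x : E) :
    slabSeminorm θ p f x ≤ p x :=
  max_le (mul_le_of_le_one_left (apply_nonneg p x) hθ) (hf x)

theorem slabSeminorm_eq_mul {x : E} (hx : f x = 0) : slabSeminorm θ p f x = θ * p x := by
  rw [slabSeminorm_apply, hx, norm_zero, max_eq_left (by positivity)]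

theorem slabSeminorm_add_eq {x w : E} (hw : f w = 0) (hθ : θ * (p x + p w) ≤ ‖f x‖) :
    slabSeminorm θ p f (x + w) = slabSeminorm θ p f x := by
  have hxw : θ * p (x + w) ≤ ‖f x‖ :=
    (mul_le_mul_of_nonneg_left (map_add_le_add p x w) θ.coe_nonneg).trans hθ
  have hx : θ * p x ≤ ‖f x‖ :=
    (mul_le_mul_of_nonneg_left (le_add_of_nonneg_right (apply_nonneg p w)) θ.coe_nonneg).trans hθ
  rw [slabSeminorm_apply, slabSeminorm_apply, f.map_add, hw, add_zero, max_eq_right hxw,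
    max_eq_right hx]

end SlabSeminorm

theorem not_isLocallyUniformlyConvexAt_addNormComp_slabSeminorm {p : Seminorm ℝ E}
    {f : Module.Dual ℝ E} {T : E →ₗ[ℝ] H} {θ t : ℝ≥0} (hθ0 : 0 < θ) (hθ1 : θ < 1) {e : E}
    (hpe : 0 < p e) (hfe : f e = p e) (he : addNormComp (slabSeminorm θ p f) t T e = 1)
    {w : ℕ → E} (hpw : ∀ n, p (w n) = (1 - θ) * p e) (hfw : ∀ n, f (w n) = 0)
    (hTw : Tendsto (fun n => T (w n)) atTop (𝓝 0)) :
    ¬ IsLocallyUniformlyConvexAt (addNormComp (slabSeminorm θ p f) t T) e := by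
  have hθ : 0 < 1 - (θ : ℝ) := sub_pos.2 hθ1
  have hflat {c : ℝ} (hc : 1 ≤ c) (n : ℕ) :
      slabSeminorm θ p f (c • e + w n) = slabSeminorm θ p f (c • e) := by
    refine slabSeminorm_add_eq (hfw n) ?_
    have hslack : 0 ≤ (1 - θ) * (c - θ) * p e :=
      mul_nonneg (mul_nonneg hθ.le (by linarith)) hpe.le
    rw [f.map_smul, norm_smul, map_smul_eq_mul, hpw, hfe, Real.norm_of_nonneg hpe.le,
      Real.norm_of_nonneg (by linarith)]
    linarith
  refine not_isLocallyUniformlyConvexAt_addNormComp he ?_ ?_ hTw ?_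
  · simpa only [one_smul] using tendsto_const_nhds.congr fun n => (hflat le_rfl n).symm
  · exact tendsto_const_nhds.congr fun n => (hflat one_le_two n).symm
  · simp only [slabSeminorm_eq_mul (hfw _), hpw, tendsto_const_nhds_iff]
    positivity

theorem exists_not_isLocallyUniformlyConvexAt {p : Seminorm ℝ E} {F : ℕ → Module.Dual ℝ E}
    (hF : ∀ k x, ‖F k x‖ ≤ p x) (hE : ¬ FiniteDimensional ℝ E) (hp0 : ∀ x, p x = 0 → x = 0)
    {f : Module.Dual ℝ E} {θ t : ℝ≥0} (hθ0 : 0 < θ) (hθ1 : θ < 1) {x : E} (hx : x ≠ 0)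
    (hfx : f x = p x) :
    ∃ e, addNormComp (slabSeminorm θ p f) t (weightedCoord hF) e = 1 ∧
      ¬ IsLocallyUniformlyConvexAt (addNormComp (slabSeminorm θ p f) t (weightedCoord hF)) e := by
  set q := addNormComp (slabSeminorm θ p f) t (weightedCoord hF)
  have hpx : 0 < p x := (apply_nonneg p x).lt_of_ne' (mt (hp0 x) hx)
  have hqx : 0 < q x :=
    (mul_pos (NNReal.coe_pos.2 hθ0) hpx).trans_le
      ((mul_le_slabSeminorm x).trans (le_addNormComp x))
  have hc : 0 < (q x)⁻¹ := inv_pos.2 hqx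
  let e : E := (q x)⁻¹ • x
  have hpe : p e = (q x)⁻¹ * p x := by rw [map_smul_eq_mul, Real.norm_of_nonneg hc.le]
  have hqe : q e = 1 := by
    rw [map_smul_eq_mul, Real.norm_of_nonneg hc.le, inv_mul_cancel₀ hqx.ne']
  have hfe : f e = p e := by rw [f.map_smul, hfx, smul_eq_mul, hpe]
  obtain ⟨w, hpw, hfw, hTw⟩ := exists_seq_weightedCoord_tendsto_zero hF hE hp0 f
    (mul_nonneg (sub_nonneg.2 hθ1.le) (apply_nonneg p e))
  exact ⟨e, hqe, not_isLocallyUniformlyConvexAt_addNormComp_slabSeminorm hθ0 hθ1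
    (hpe ▸ mul_pos hc hpx) hfe hqe hpw hfw hTw⟩

theorem addNormComp_weightedCoord_le {p q : Seminorm ℝ E} {F : ℕ → Module.Dual ℝ E} {t : ℝ≥0}
    (hF : ∀ k x, ‖F k x‖ ≤ p x) {x : E} (hqp : q x ≤ p x) :
    addNormComp q t (weightedCoord hF) x ≤ (1 + 2 * t) * p x := by
  have hT : ‖weightedCoord hF x‖ ≤ 2 * p x := by
    simpa using norm_weightedCoord_le hF (n := 0) (x := x) (by simp)
  calc addNormComp q t (weightedCoord hF) x = q x + t * ‖weightedCoord hF x‖ := rfl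
    _ ≤ p x + t * (2 * p x) := by gcongr
    _ = (1 + 2 * t) * p x := by ring

theorem stmt12_general (hE : ¬ FiniteDimensional ℝ E) {p : Seminorm ℝ E}
    (hF : ∃ F : ℕ → Module.Dual ℝ E, (∀ k x, ‖F k x‖ ≤ p x) ∧ ∀ x, (∀ k, F k x = 0) → x = 0)
    {δ : ℝ} (hδ : 0 < δ) :
    ∃ q : Seminorm ℝ E, (∀ x, q x = 0 → x = 0) ∧
      (∀ x, Real.exp (-δ) * p x ≤ q x ∧ q x ≤ Real.exp δ * p x) ∧
      IsStrictlyConvex q ∧ ∃ e, q e = 1 ∧ ¬ IsLocallyUniformlyConvexAt q e := by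
  obtain ⟨F, hF, hsep⟩ := hF
  have hp0 (x : E) (hx : p x = 0) : x = 0 :=
    hsep x fun k => norm_le_zero_iff.1 ((hF k x).trans_eq hx)
  obtain ⟨x, hx, -⟩ := exists_ne_zero_map_eq_zero hE (0 : Module.Dual ℝ E)
  obtain ⟨f, hfx, hf⟩ := exists_dual_apply_eq_seminorm p x
  let θ : ℝ≥0 := ⟨Real.exp (-δ), (Real.exp_pos _).le⟩
  have hθ0 : 0 < θ := Real.exp_pos (-δ)
  have hθ1 : θ < 1 := Real.exp_lt_one_iff.2 (neg_lt_zero.2 hδ)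
  let t : ℝ≥0 := ⟨δ / 2, by positivity⟩
  let q : Seminorm ℝ E := addNormComp (slabSeminorm θ p f) t (weightedCoord hF)
  have hpq (y : E) : θ * p y ≤ q y := (mul_le_slabSeminorm y).trans (le_addNormComp y)
  have hqp (y : E) : q y ≤ Real.exp δ * p y := calc
    q y ≤ (1 + 2 * (δ / 2)) * p y :=
      addNormComp_weightedCoord_le hF (slabSeminorm_le hθ1.le hf y)
    _ ≤ Real.exp δ * p y := by
      gcongr
      linarith [Real.add_one_le_exp δ]
  have hq0 (y : E) (hy : q y = 0) : y = 0 :=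
    hp0 y ((nonpos_of_mul_nonpos_right ((hpq y).trans_eq hy) hθ0).antisymm (apply_nonneg p y))
  exact ⟨q, hq0, fun y => ⟨hpq y, hqp y⟩,
    isStrictlyConvex_addNormComp (half_pos hδ) (weightedCoord_injective hF hsep),
    exists_not_isLocallyUniformlyConvexAt hF hE hp0 hθ0 hθ1 hx hfx⟩

end Renorming

/-- Lemma 5.4: on an infinite-dimensional separable Banach space `Y`, the strictly convex
norms which are not locally uniformly convex are dense (w.r.t. the Banach–Mazur distance)
among all equivalent norms: given any equivalent norm `N₀` on `Y` and `δ > 0`, there is an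
equivalent norm `N₁` with `e^{-δ} N₀ ≤ N₁ ≤ e^{δ} N₀` which is strictly convex but not
locally uniformly convex (in particular, not uniformly convex). -/
theorem stmt12 (Y : Type*) [NormedAddCommGroup Y] [NormedSpace ℝ Y] [CompleteSpace Y]
    [TopologicalSpace.SeparableSpace Y] (hinf : ¬ FiniteDimensional ℝ Y)
    (N₀ : Y → ℝ)
    (hN₀zero : ∀ y, N₀ y = 0 → y = 0)
    (hN₀smul : ∀ (c : ℝ) (y : Y), N₀ (c • y) = |c| * N₀ y)
    (hN₀add : ∀ x y : Y, N₀ (x + y) ≤ N₀ x + N₀ y)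
    (hN₀equiv : ∃ a b : ℝ, 0 < a ∧ ∀ y : Y, a * ‖y‖ ≤ N₀ y ∧ N₀ y ≤ b * ‖y‖)
    (δ : ℝ) (hδ : 0 < δ) :
    ∃ N₁ : Y → ℝ,
      -- `N₁` is an equivalent norm within Banach–Mazur distance `δ` of `N₀`
      (∀ y, N₁ y = 0 → y = 0) ∧
      (∀ (c : ℝ) (y : Y), N₁ (c • y) = |c| * N₁ y) ∧
      (∀ x y : Y, N₁ (x + y) ≤ N₁ x + N₁ y) ∧
      (∀ y, Real.exp (-δ) * N₀ y ≤ N₁ y ∧ N₁ y ≤ Real.exp δ * N₀ y) ∧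
      -- `N₁` is strictly convex
      (∀ x y : Y, N₁ x = 1 → N₁ y = 1 → N₁ ((2⁻¹ : ℝ) • (x + y)) = 1 → x = y) ∧
      -- `N₁` is not locally uniformly convex
      (∃ e : Y, N₁ e = 1 ∧ ∃ u : ℕ → Y,
        Tendsto (fun n => N₁ (u n)) atTop (nhds 1) ∧
        Tendsto (fun n => N₁ (e + u n)) atTop (nhds 2) ∧
        ¬ Tendsto (fun n => N₁ (e - u n)) atTop (nhds 0)) := by
  obtain ⟨_, b, -, hb⟩ := hN₀equiv
  obtain ⟨q, hq0, hq, hsc, hluc⟩ := stmt12_general hinf (exists_separating_seq_dual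
    (continuous_of_le_mul_norm (p := .of N₀ hN₀add hN₀smul) fun y => (hb y).2) hN₀zero) hδ
  exact ⟨q, hq0, map_smul_eq_mul q, map_add_le_add q, hq, hsc,
    by simpa only [IsLocallyUniformlyConvexAt, not_forall, exists_prop] using hluc⟩
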